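/- arXiv:1507.03973 — 2 statements merged into one kernel-verified Lean document; each statement's English description precedes it below -/
import Mathlib

section
/- There is a one-to-one correspondence between generalized almost contact structures I on (V,L) and triples (φ, J♯, ω♭) of linear maps φ : V → V, J♯ : Hom(V,L) → V skew, ω♭ : V → Hom(V,L) skew satisfying φ ∘ J♯ = J♯ ∘ φ†, φ² = −id − J♯ ∘ ω♭, and ω♭ ∘ φ = φ† ∘ ω♭; the correspondence sends the triple (φ, J♯, ω♭) to the endomorphism I(v,ψ) = (φ(v) + J♯(ψ), ω♭(v) − φ†(ψ)) of 𝔻 = V ⊕ Hom(V,L). -/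
/-- The `L`-valued symmetric pairing on `𝔻 := V ⊕ Hom(V, L)`:
`⟨⟨(v, ψ), (w, χ)⟩⟩ := χ(v) + ψ(w)`. -/
def pairD {K V L : Type*} [Field K] [AddCommGroup V] [Module K V]
    [AddCommGroup L] [Module K L] (α β : V × (V →ₗ[K] L)) : L :=
  β.2 α.1 + α.2 β.1

/-- The adjoint `φ† : Hom(V, L) → Hom(V, L)`, `φ†(ψ) := ψ ∘ φ`. -/
def adjD {K V : Type*} (L : Type*) [Field K] [AddCommGroup V] [Module K V]
    [AddCommGroup L] [Module K L] (φ : V →ₗ[K] V) :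
    (V →ₗ[K] L) →ₗ[K] (V →ₗ[K] L) :=
  (LinearMap.llcomp K V V L).flip φ

/-!
Write an endomorphism of `V ⊕ Hom(V, L)` as a block matrix with entries `φ`, `J`, `ω`, `θ`.
Skew-adjointness says exactly that `J` and `ω` are skew and `θ = -φ†`. The square being `-id` is
then four block equations, of which three are the structure equations of a triple; the fourth,
`ω ∘ J + φ† ∘ φ† = -id`, is the adjoint of `φ ∘ φ + J ∘ ω = -id`, because skewness of `J` and `ω`
gives `(J ∘ ω)† = ω ∘ J`.
-/

section BlockEnd

variable {R M N : Type*}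

/-- The endomorphism of `M × N` with block matrix `!![a, b; c, d]` acting on column vectors. -/
def blockEnd [Semiring R] [AddCommMonoid M] [Module R M] [AddCommMonoid N] [Module R N]
    (a : M →ₗ[R] M) (b : N →ₗ[R] M) (c : M →ₗ[R] N) (d : N →ₗ[R] N) :
    (M × N) →ₗ[R] (M × N) :=
  (a.coprod b).prod (c.coprod d)

section Semiring

variable [Semiring R] [AddCommMonoid M] [Module R M] [AddCommMonoid N] [Module R N]
  {a a' : M →ₗ[R] M} {b b' : N →ₗ[R] M} {c c' : M →ₗ[R] N} {d d' : N →ₗ[R] N}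

@[simp]
theorem blockEnd_apply (x : M × N) :
    blockEnd a b c d x = (a x.1 + b x.2, c x.1 + d x.2) :=
  rfl

theorem blockEnd_inj :
    blockEnd a b c d = blockEnd a' b' c' d' ↔ a = a' ∧ b = b' ∧ c = c' ∧ d = d' := by
  refine ⟨fun h ↦ ?_, by rintro ⟨rfl, rfl, rfl, rfl⟩; rfl⟩
  have on_left (x : M) := LinearMap.congr_fun h (x, 0)
  have on_right (y : N) := LinearMap.congr_fun h (0, y)
  simp only [blockEnd_apply, map_zero, add_zero, zero_add, Prod.mk.injEq] at on_left on_right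
  exact ⟨LinearMap.ext fun x ↦ (on_left x).1, LinearMap.ext fun y ↦ (on_right y).1,
    LinearMap.ext fun x ↦ (on_left x).2, LinearMap.ext fun y ↦ (on_right y).2⟩

theorem exists_eq_blockEnd (f : (M × N) →ₗ[R] (M × N)) :
    ∃ a b c d, f = blockEnd a b c d :=
  ⟨.fst R M N ∘ₗ f ∘ₗ .inl R M N, .fst R M N ∘ₗ f ∘ₗ .inr R M N,
    .snd R M N ∘ₗ f ∘ₗ .inl R M N, .snd R M N ∘ₗ f ∘ₗ .inr R M N,
    by ext <;> simp [Prod.mk_zero_zero]⟩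

theorem blockEnd_comp_blockEnd :
    blockEnd a b c d ∘ₗ blockEnd a' b' c' d' =
      blockEnd (a ∘ₗ a' + b ∘ₗ c') (a ∘ₗ b' + b ∘ₗ d')
        (c ∘ₗ a' + d ∘ₗ c') (c ∘ₗ b' + d ∘ₗ d') := by
  ext <;> simp

end Semiring

theorem blockEnd_sq_eq_neg_iff [Ring R] [AddCommGroup M] [Module R M] [AddCommGroup N]
    [Module R N] {a : M →ₗ[R] M} {b : N →ₗ[R] M} {c : M →ₗ[R] N} {d : N →ₗ[R] N} :
    (∀ x, blockEnd a b c d (blockEnd a b c d x) = -x) ↔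
      a ∘ₗ a + b ∘ₗ c = -LinearMap.id ∧ a ∘ₗ b + b ∘ₗ d = 0 ∧
        c ∘ₗ a + d ∘ₗ c = 0 ∧ c ∘ₗ b + d ∘ₗ d = -LinearMap.id := by
  have neg_id_eq : -LinearMap.id =
      blockEnd (-LinearMap.id : M →ₗ[R] M) 0 0 (-LinearMap.id : N →ₗ[R] N) := by
    ext <;> simp
  rw [← blockEnd_inj, ← blockEnd_comp_blockEnd, ← neg_id_eq, LinearMap.ext_iff]
  rfl

end BlockEnd

section GeneralizedAlmostContact

variable {R V L : Type*} [CommRing R] [AddCommGroup V] [Module R V] [AddCommGroup L] [Module R L]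

/-- The `L`-valued symmetric pairing `⟨⟨(v, ψ), (w, χ)⟩⟩ = χ(v) + ψ(w)` on `V ⊕ Hom(V, L)`, for
modules over a commutative ring; over a field it is `pairD`. -/
def homPairing (α β : V × (V →ₗ[R] L)) : L :=
  β.2 α.1 + α.2 β.1

/-- Generalized almost contact structures over a commutative ring: endomorphisms of
`V ⊕ Hom(V, L)` that square to `-id` and are skew-adjoint for `homPairing`. -/
def IsGeneralizedAlmostContact (I : (V × (V →ₗ[R] L)) →ₗ[R] (V × (V →ₗ[R] L))) : Prop :=
  (∀ α, I (I α) = -α) ∧ ∀ α β, homPairing (I α) β + homPairing α (I β) = 0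

/-- The skewness conditions and structure equations on a triple `(φ, J♯, ω♭)` that make it the
data of a generalized almost contact structure. The adjoint `φ†` is `LinearMap.lcomp R L φ`. -/
def IsGacsTriple (φ : V →ₗ[R] V) (J : (V →ₗ[R] L) →ₗ[R] V) (ω : V →ₗ[R] V →ₗ[R] L) : Prop :=
  (∀ ψ χ : V →ₗ[R] L, ψ (J χ) = -χ (J ψ)) ∧
    (∀ v w : V, ω v w = -ω w v) ∧
    φ ∘ₗ J = J ∘ₗ φ.lcomp R L ∧
    φ ∘ₗ φ = -LinearMap.id - J ∘ₗ ω ∧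
    ω ∘ₗ φ = φ.lcomp R L ∘ₗ ω

variable {φ : V →ₗ[R] V} {J : (V →ₗ[R] L) →ₗ[R] V} {ω : V →ₗ[R] V →ₗ[R] L}
  {θ : (V →ₗ[R] L) →ₗ[R] (V →ₗ[R] L)}

theorem blockEnd_skewAdjoint_iff :
    (∀ α β, homPairing (blockEnd φ J ω θ α) β + homPairing α (blockEnd φ J ω θ β) = 0) ↔
      (∀ ψ χ : V →ₗ[R] L, ψ (J χ) = -χ (J ψ)) ∧ (∀ v w : V, ω v w = -ω w v) ∧
        θ = -φ.lcomp R L := by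
  constructor
  · intro skew
    refine ⟨fun ψ χ ↦ ?_, fun v w ↦ ?_, LinearMap.ext₂ fun ψ w ↦ ?_⟩
    · simpa [homPairing] using eq_neg_of_add_eq_zero_left (skew (0, χ) (0, ψ))
    · simpa [homPairing] using eq_neg_of_add_eq_zero_left (skew (v, 0) (w, 0))
    · simpa [homPairing] using eq_neg_of_add_eq_zero_left (skew (0, ψ) (w, 0))
  · rintro ⟨J_skew, ω_skew, rfl⟩ ⟨v, ψ⟩ ⟨w, χ⟩
    simp only [homPairing, blockEnd_apply, map_add, LinearMap.add_apply, LinearMap.neg_apply,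
      LinearMap.lcomp_apply, J_skew ψ χ, ω_skew v w]
    abel

theorem lcomp_comp_eq_comp_of_skew (J_skew : ∀ ψ χ : V →ₗ[R] L, ψ (J χ) = -χ (J ψ))
    (ω_skew : ∀ v w : V, ω v w = -ω w v) : (J ∘ₗ ω).lcomp R L = ω ∘ₗ J := by
  ext ψ v
  calc ψ (J (ω v)) = -ω v (J ψ) := J_skew ψ (ω v)
    _ = ω (J ψ) v := (ω_skew (J ψ) v).symm

theorem comp_add_lcomp_comp_lcomp_eq_neg_id (J_skew : ∀ ψ χ : V →ₗ[R] L, ψ (J χ) = -χ (J ψ))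
    (ω_skew : ∀ v w : V, ω v w = -ω w v) (φ_sq : φ ∘ₗ φ + J ∘ₗ ω = -LinearMap.id) :
    ω ∘ₗ J + φ.lcomp R L ∘ₗ φ.lcomp R L = -LinearMap.id := by
  rw [← lcomp_comp_eq_comp_of_skew J_skew ω_skew]
  ext ψ v
  calc ψ (J (ω v)) + ψ (φ (φ v)) = ψ ((φ ∘ₗ φ + J ∘ₗ ω) v) := by simp [add_comm]
    _ = -ψ v := by simp [φ_sq]

theorem isGeneralizedAlmostContact_blockEnd_iff :
    IsGeneralizedAlmostContact (blockEnd φ J ω θ) ↔ IsGacsTriple φ J ω ∧ θ = -φ.lcomp R L := by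
  rw [IsGeneralizedAlmostContact, blockEnd_skewAdjoint_iff, blockEnd_sq_eq_neg_iff, IsGacsTriple]
  constructor
  · rintro ⟨⟨φ_sq, φ_J, ω_φ, -⟩, J_skew, ω_skew, rfl⟩
    rw [LinearMap.comp_neg, ← sub_eq_add_neg, sub_eq_zero] at φ_J
    rw [LinearMap.neg_comp, ← sub_eq_add_neg, sub_eq_zero] at ω_φ
    exact ⟨⟨J_skew, ω_skew, φ_J, eq_sub_of_add_eq φ_sq, ω_φ⟩, rfl⟩
  · rintro ⟨⟨J_skew, ω_skew, φ_J, φ_sq, ω_φ⟩, rfl⟩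
    rw [eq_sub_iff_add_eq] at φ_sq
    refine ⟨⟨φ_sq, ?_, ?_, ?_⟩, J_skew, ω_skew, rfl⟩
    · rw [LinearMap.comp_neg, φ_J, add_neg_cancel]
    · rw [LinearMap.neg_comp, ω_φ, add_neg_cancel]
    · rw [LinearMap.neg_comp, LinearMap.comp_neg, neg_neg]
      exact comp_add_lcomp_comp_lcomp_eq_neg_id J_skew ω_skew φ_sq

variable (R V L) in
theorem gacs_equiv_triples_general :
    ∃ e : {t : (V →ₗ[R] V) × ((V →ₗ[R] L) →ₗ[R] V) × (V →ₗ[R] V →ₗ[R] L) //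
            IsGacsTriple t.1 t.2.1 t.2.2} ≃
          {I : (V × (V →ₗ[R] L)) →ₗ[R] (V × (V →ₗ[R] L)) // IsGeneralizedAlmostContact I},
      ∀ t (v : V) (ψ : V →ₗ[R] L),
        (e t).val (v, ψ) = (t.val.1 v + t.val.2.1 ψ, t.val.2.2 v - ψ ∘ₗ t.val.1) := by
  let ofTriple (t : {t : (V →ₗ[R] V) × ((V →ₗ[R] L) →ₗ[R] V) × (V →ₗ[R] V →ₗ[R] L) //
      IsGacsTriple t.1 t.2.1 t.2.2}) :
      {I : (V × (V →ₗ[R] L)) →ₗ[R] (V × (V →ₗ[R] L)) // IsGeneralizedAlmostContact I} :=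
    ⟨blockEnd t.1.1 t.1.2.1 t.1.2.2 (-t.1.1.lcomp R L),
      isGeneralizedAlmostContact_blockEnd_iff.2 ⟨t.2, rfl⟩⟩
  have ofTriple_injective : Function.Injective ofTriple := by
    rintro ⟨⟨φ, J, ω⟩, _⟩ ⟨⟨φ', J', ω'⟩, _⟩ h
    obtain ⟨rfl, rfl, rfl, -⟩ := blockEnd_inj.1 (congrArg Subtype.val h)
    rfl
  have ofTriple_surjective : Function.Surjective ofTriple := by
    rintro ⟨I, hI⟩
    obtain ⟨φ, J, ω, θ, rfl⟩ := exists_eq_blockEnd I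
    obtain ⟨triple, rfl⟩ := isGeneralizedAlmostContact_blockEnd_iff.1 hI
    exact ⟨⟨(φ, J, ω), triple⟩, rfl⟩
  refine ⟨.ofBijective ofTriple ⟨ofTriple_injective, ofTriple_surjective⟩, fun t v ψ ↦ ?_⟩
  exact Prod.ext rfl (sub_eq_add_neg _ _).symm

end GeneralizedAlmostContact

/-- One-to-one correspondence between triples `(φ, J♯, ω♭)` (with `J♯`,
`ω♭` skew, satisfying the three structure equations) and generalized almost contact
structures `I` on `(V, L)` (endomorphisms of `𝔻 = V ⊕ Hom(V, L)` with `I² = −id`,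
skew-adjoint for the pairing), sending `(φ, J♯, ω♭)` to
`I(v, ψ) = (φ v + J♯ ψ, ω♭ v − φ† ψ)`. -/
theorem gacs_equiv_triples
    (K V L : Type*) [Field K] [AddCommGroup V] [Module K V] [FiniteDimensional K V]
    [AddCommGroup L] [Module K L] (hL : Module.finrank K L = 1) :
    ∃ e : {t : (V →ₗ[K] V) × ((V →ₗ[K] L) →ₗ[K] V) × (V →ₗ[K] V →ₗ[K] L) //
            (∀ ψ χ : V →ₗ[K] L, ψ (t.2.1 χ) = -χ (t.2.1 ψ)) ∧
            (∀ v w : V, t.2.2 v w = -t.2.2 w v) ∧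
            t.1.comp t.2.1 = t.2.1.comp (adjD L t.1) ∧
            t.1.comp t.1 = -LinearMap.id - t.2.1.comp t.2.2 ∧
            t.2.2.comp t.1 = (adjD L t.1).comp t.2.2} ≃
          {I : (V × (V →ₗ[K] L)) →ₗ[K] (V × (V →ₗ[K] L)) //
            (∀ α : V × (V →ₗ[K] L), I (I α) = -α) ∧
            (∀ α β : V × (V →ₗ[K] L), pairD (I α) β + pairD α (I β) = 0)},
      ∀ t (v : V) (ψ : V →ₗ[K] L),
        (e t).val (v, ψ) = (t.val.1 v + t.val.2.1 ψ, t.val.2.2 v - ψ.comp t.val.1) := by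
  exact gacs_equiv_triples_general K V L
end

section
/- There is a one-to-one correspondence between (a) triples (φ, J♯, ω♭) with J♯ skew and bijective, ω♭ skew, satisfying the structure equations φ ∘ J♯ = J♯ ∘ φ†, φ² = −id − J♯ ∘ ω♭, ω♭ ∘ φ = φ† ∘ ω♭ (i.e. generalized almost contact structures on (V,L) with nondegenerate J), and (b) pairs (ω_J♭, φ) where ω_J♭ : V → Hom(V,L) is skew and bijective and φ : V → V satisfies ω_J♭ ∘ φ = φ† ∘ ω_J♭ (the linear-algebraic datum of a contact–Hitchin pair). The correspondence is given by ω_J♭ = (J♯)⁻¹ in one direction, and by J♯ = (ω_J♭)⁻¹, ω♭ = −(ω_J♭ + φ† ∘ ω_J♭ ∘ φ) in the other; these two assignments are mutually inverse. -/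
/-!
If `J♯` is invertible with inverse `ω_J♭`, the structure equation `φ² = -id - J♯ ∘ ω♭` can be
solved for `ω♭`, namely `ω♭ = -(ω_J♭ + ω_J♭ ∘ φ²)`. Since `φ ∘ J♯ = J♯ ∘ φ†` says the same as
`ω_J♭ ∘ φ = φ† ∘ ω_J♭`, this is `-(ω_J♭ + φ† ∘ ω_J♭ ∘ φ)`, and for an `ω♭` of this form skewness and
`ω♭ ∘ φ = φ† ∘ ω♭` are automatic. Hence `(ω_J♭, φ)` determines the triple, and is otherwise
constrained only by the conditions on a contact–Hitchin pair.
-/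

section LinearEquiv

variable {R M N : Type*} [Semiring R] [AddCommMonoid M] [Module R M] [AddCommMonoid N] [Module R N]

theorem comp_symm_eq_symm_comp_iff (e : M ≃ₗ[R] N) (f : M →ₗ[R] M) (g : N →ₗ[R] N) :
    f ∘ₗ e.symm.toLinearMap = e.symm.toLinearMap ∘ₗ g ↔
      e.toLinearMap ∘ₗ f = g ∘ₗ e.toLinearMap := by
  rw [LinearEquiv.eq_toLinearMap_symm_comp, ← LinearMap.comp_assoc,
    LinearEquiv.comp_toLinearMap_symm_eq]

theorem ofBijective_toLinearMap (e : M ≃ₗ[R] N) (h : Function.Bijective e.toLinearMap) :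
    LinearEquiv.ofBijective e.toLinearMap h = e :=
  LinearEquiv.ext fun _ ↦ rfl

end LinearEquiv

section ContactHitchin

open LinearMap

variable {R M N : Type*} [CommRing R] [AddCommGroup M] [Module R M] [AddCommGroup N] [Module R N]

/-- Skewness of an `N`-valued bilinear form `ω♭ : M → Hom(M, N)`. In characteristic two this is
weaker than `LinearMap.IsAlt`. -/
def IsSkewForm (ω : M →ₗ[R] M →ₗ[R] N) : Prop :=
  ∀ v w, ω v w = -ω w v

/-- Skewness of an `N`-valued bivector, encoded as the map `J♯ : Hom(M, N) → M`. -/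
def IsSkewBivector (J : (M →ₗ[R] N) →ₗ[R] M) : Prop :=
  ∀ ψ χ : M →ₗ[R] N, ψ (J χ) = -χ (J ψ)

/-- Generalized almost contact structures `(φ, J♯, ω♭)` with nondegenerate `J`, for the module `M`
and the module of values `N`; the adjoint `φ†` is `LinearMap.lcomp R N φ`. -/
def IsNondegenerateGACS (φ : M →ₗ[R] M) (J : (M →ₗ[R] N) →ₗ[R] M)
    (ω : M →ₗ[R] M →ₗ[R] N) : Prop :=
  IsSkewBivector J ∧ Function.Bijective J ∧ IsSkewForm ω ∧
    φ ∘ₗ J = J ∘ₗ lcomp R N φ ∧ φ ∘ₗ φ = -LinearMap.id - J ∘ₗ ω ∧ ω ∘ₗ φ = lcomp R N φ ∘ₗ ω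

/-- The linear-algebraic datum `(ω_J♭, φ)` of a contact–Hitchin pair; the adjoint `φ†` is
`LinearMap.lcomp R N φ`. -/
def IsContactHitchinPair (W : M →ₗ[R] M →ₗ[R] N) (φ : M →ₗ[R] M) : Prop :=
  IsSkewForm W ∧ Function.Bijective W ∧ W ∘ₗ φ = lcomp R N φ ∘ₗ W

/-- The form `-(ω_J♭ + φ† ∘ ω_J♭ ∘ φ)`, which completes a contact–Hitchin pair `(ω_J♭, φ)` to a
generalized almost contact structure. -/
def contactHitchinForm (W : M →ₗ[R] M →ₗ[R] N) (φ : M →ₗ[R] M) : M →ₗ[R] M →ₗ[R] N :=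
  -(W + lcomp R N φ ∘ₗ W ∘ₗ φ)

theorem IsSkewForm.contactHitchinForm {W : M →ₗ[R] M →ₗ[R] N} (hW : IsSkewForm W)
    (φ : M →ₗ[R] M) : IsSkewForm (contactHitchinForm W φ) := by
  intro v w
  change -(W v w + W (φ v) (φ w)) = - -(W w v + W (φ w) (φ v))
  rw [hW v w, hW (φ v) (φ w), ← neg_add]

theorem contactHitchinForm_comp {W : M →ₗ[R] M →ₗ[R] N} {φ : M →ₗ[R] M}
    (h : W ∘ₗ φ = lcomp R N φ ∘ₗ W) :
    contactHitchinForm W φ ∘ₗ φ = lcomp R N φ ∘ₗ contactHitchinForm W φ := by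
  simp only [contactHitchinForm, neg_comp, comp_neg, add_comp, comp_add, comp_assoc, h]

theorem isSkewBivector_symm_iff (e : M ≃ₗ[R] M →ₗ[R] N) :
    IsSkewBivector (e.symm : (M →ₗ[R] N) →ₗ[R] M) ↔ IsSkewForm (e : M →ₗ[R] M →ₗ[R] N) := by
  simp only [IsSkewBivector, IsSkewForm, e.surjective.forall, LinearEquiv.coe_coe,
    LinearEquiv.symm_apply_apply]

theorem comp_self_eq_neg_id_sub_symm_comp_iff (e : M ≃ₗ[R] M →ₗ[R] N) {φ : M →ₗ[R] M}
    (h : e.toLinearMap ∘ₗ φ = lcomp R N φ ∘ₗ e.toLinearMap) (ω : M →ₗ[R] M →ₗ[R] N) :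
    φ ∘ₗ φ = -LinearMap.id - e.symm.toLinearMap ∘ₗ ω ↔ ω = contactHitchinForm e φ := by
  have hsandwich : lcomp R N φ ∘ₗ e.toLinearMap ∘ₗ φ = e.toLinearMap ∘ₗ φ ∘ₗ φ := by
    rw [← comp_assoc, ← h, comp_assoc]
  calc φ ∘ₗ φ = -LinearMap.id - e.symm.toLinearMap ∘ₗ ω
    _ ↔ e.symm.toLinearMap ∘ₗ ω = -(LinearMap.id + φ ∘ₗ φ) := by
      rw [eq_sub_iff_add_eq', ← eq_sub_iff_add_eq, neg_add']
    _ ↔ ω = e.toLinearMap ∘ₗ (-(LinearMap.id + φ ∘ₗ φ)) := LinearEquiv.toLinearMap_symm_comp_eq ..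
    _ ↔ ω = contactHitchinForm e φ := by
      rw [contactHitchinForm, comp_neg, comp_add, comp_id, hsandwich]

theorem isNondegenerateGACS_symm_iff (e : M ≃ₗ[R] M →ₗ[R] N) (φ : M →ₗ[R] M)
    (ω : M →ₗ[R] M →ₗ[R] N) :
    IsNondegenerateGACS φ e.symm ω ↔
      IsContactHitchinPair (e : M →ₗ[R] M →ₗ[R] N) φ ∧ ω = contactHitchinForm e φ := by
  constructor
  · rintro ⟨hJ, -, -, hφJ, hφφ, -⟩
    have hφ := (comp_symm_eq_symm_comp_iff e φ _).1 hφJ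
    exact ⟨⟨(isSkewBivector_symm_iff e).1 hJ, e.bijective, hφ⟩,
      (comp_self_eq_neg_id_sub_symm_comp_iff e hφ ω).1 hφφ⟩
  · rintro ⟨⟨he, -, hφ⟩, rfl⟩
    exact ⟨(isSkewBivector_symm_iff e).2 he, e.symm.bijective, he.contactHitchinForm φ,
      (comp_symm_eq_symm_comp_iff e φ _).2 hφ,
      (comp_self_eq_neg_id_sub_symm_comp_iff e hφ _).2 rfl, contactHitchinForm_comp hφ⟩

variable (R M N)

/-- The correspondence between nondegenerate generalized almost contact structures and
contact–Hitchin pairs: `(φ, J♯, ω♭) ↦ ((J♯)⁻¹, φ)`, with inverse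
`(ω_J♭, φ) ↦ (φ, (ω_J♭)⁻¹, -(ω_J♭ + φ† ∘ ω_J♭ ∘ φ))`. -/
noncomputable def nondegenerateGACSEquivContactHitchinPair :
    {t : (M →ₗ[R] M) × ((M →ₗ[R] N) →ₗ[R] M) × (M →ₗ[R] M →ₗ[R] N) //
      IsNondegenerateGACS t.1 t.2.1 t.2.2} ≃
    {p : (M →ₗ[R] M →ₗ[R] N) × (M →ₗ[R] M) // IsContactHitchinPair p.1 p.2} where
  toFun t :=
    let e := LinearEquiv.ofBijective t.1.2.1 t.2.2.1
    ⟨(e.symm, t.1.1), ((isNondegenerateGACS_symm_iff e.symm _ _).1 t.2).1⟩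
  invFun p :=
    let e := LinearEquiv.ofBijective p.1.1 p.2.2.1
    ⟨(p.1.2, e.symm, contactHitchinForm p.1.1 p.1.2),
      (isNondegenerateGACS_symm_iff e _ _).2 ⟨p.2, rfl⟩⟩
  left_inv := by
    rintro ⟨⟨φ, J, ω⟩, h⟩
    let e := LinearEquiv.ofBijective J h.2.1
    have hω : ω = contactHitchinForm e.symm φ := ((isNondegenerateGACS_symm_iff e.symm φ ω).1 h).2
    refine Subtype.ext (Prod.ext rfl (Prod.ext ?_ hω.symm))
    exact congrArg (fun f ↦ f.symm.toLinearMap) (ofBijective_toLinearMap e.symm e.symm.bijective)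
  right_inv := by
    rintro ⟨⟨W, φ⟩, h⟩
    let e := LinearEquiv.ofBijective W h.2.1
    refine Subtype.ext (Prod.ext ?_ rfl)
    exact congrArg (fun f ↦ f.symm.toLinearMap) (ofBijective_toLinearMap e.symm e.symm.bijective)

theorem gacs_nondeg_equiv_contactHitchin_general :
    ∃ e : {t : (M →ₗ[R] M) × ((M →ₗ[R] N) →ₗ[R] M) × (M →ₗ[R] M →ₗ[R] N) //
            IsNondegenerateGACS t.1 t.2.1 t.2.2} ≃
          {p : (M →ₗ[R] M →ₗ[R] N) × (M →ₗ[R] M) // IsContactHitchinPair p.1 p.2},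
      (∀ t, (e t).val.2 = t.val.1 ∧
            t.val.2.1 ∘ₗ (e t).val.1 = LinearMap.id ∧
            (e t).val.1 ∘ₗ t.val.2.1 = LinearMap.id) ∧
      (∀ p, (e.symm p).val.1 = p.val.2 ∧
            p.val.1 ∘ₗ (e.symm p).val.2.1 = LinearMap.id ∧
            (e.symm p).val.2.1 ∘ₗ p.val.1 = LinearMap.id ∧
            (e.symm p).val.2.2 = contactHitchinForm p.val.1 p.val.2) :=
  ⟨nondegenerateGACSEquivContactHitchinPair R M N,
    fun t ↦
      let e := LinearEquiv.ofBijective t.1.2.1 t.2.2.1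
      ⟨rfl, e.comp_symm, e.symm_comp⟩,
    fun p ↦
      let e := LinearEquiv.ofBijective p.1.1 p.2.2.1
      ⟨rfl, e.comp_symm, e.symm_comp, rfl⟩⟩

end ContactHitchin

/-- One-to-one correspondence between (a) triples `(φ, J♯, ω♭)` with
`J♯` skew bijective, `ω♭` skew, satisfying the structure equations (generalized
almost contact structures with nondegenerate `J`), and (b) pairs `(ω_J♭, φ)` with
`ω_J♭` skew bijective and `ω_J♭ ∘ φ = φ† ∘ ω_J♭` (contact–Hitchin pairs).  In one
direction `ω_J♭ = (J♯)⁻¹` and `φ` is preserved; in the other `J♯ = (ω_J♭)⁻¹` and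
`ω♭ = −(ω_J♭ + φ† ∘ ω_J♭ ∘ φ)`; these assignments are mutually inverse. -/
theorem gacs_nondeg_equiv_contactHitchin
    (K V L : Type*) [Field K] [AddCommGroup V] [Module K V] [FiniteDimensional K V]
    [AddCommGroup L] [Module K L] (hL : Module.finrank K L = 1) :
    ∃ e : {t : (V →ₗ[K] V) × ((V →ₗ[K] L) →ₗ[K] V) × (V →ₗ[K] V →ₗ[K] L) //
            (∀ ψ χ : V →ₗ[K] L, ψ (t.2.1 χ) = -χ (t.2.1 ψ)) ∧
            Function.Bijective t.2.1 ∧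
            (∀ v w : V, t.2.2 v w = -t.2.2 w v) ∧
            t.1.comp t.2.1 = t.2.1.comp (adjD L t.1) ∧
            t.1.comp t.1 = -LinearMap.id - t.2.1.comp t.2.2 ∧
            t.2.2.comp t.1 = (adjD L t.1).comp t.2.2} ≃
          {p : (V →ₗ[K] V →ₗ[K] L) × (V →ₗ[K] V) //
            (∀ v w : V, p.1 v w = -p.1 w v) ∧
            Function.Bijective p.1 ∧
            p.1.comp p.2 = (adjD L p.2).comp p.1},
      (∀ t, (e t).val.2 = t.val.1 ∧
            t.val.2.1.comp (e t).val.1 = LinearMap.id ∧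
            (e t).val.1.comp t.val.2.1 = LinearMap.id) ∧
      (∀ p, (e.symm p).val.1 = p.val.2 ∧
            p.val.1.comp (e.symm p).val.2.1 = LinearMap.id ∧
            (e.symm p).val.2.1.comp p.val.1 = LinearMap.id ∧
            (e.symm p).val.2.2
              = -(p.val.1 + (adjD L p.val.2).comp (p.val.1.comp p.val.2))) :=
  -- `adjD L φ` is definitionally `LinearMap.lcomp K L φ`.
  gacs_nondeg_equiv_contactHitchin_general K V L
end
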